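/- Let E be an integer m×N matrix and let I ⊆ [N] be any set of columns designated integral. Then every element g of the mixed Graver basis G_X(E) satisfies ‖g‖₁ ≤ (2m²‖E‖∞ + 1)^{m+1}. -/

import Mathlib

/-!
Flipping the signs of columns, one may assume `g ≥ 0`; let `Δ = ‖E‖∞`. If `E = 0`, a minimal `g` is
at most a unit vector, so let `Δ ≥ 1`.

Write `g` as a sum of *pieces*: nonzero nonnegative vectors `w`, integral on `I`, with `E w`
integral and `‖w‖₁ < m + 1 / Δ`. While `g` is too long to be a piece itself, a piece below `g` can
be split off. If `g` is nonzero on `I`, a unit vector will do. Otherwise take a large prime `p`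
and regard `g` as a sequence of columns in `(ℤ/p)^m` in which column `c` occurs `⌊p g_c⌋` times.
This sequence has more than `m (p - 1)` terms, so by Olson's theorem on the Davenport constant,
proved through Chevalley–Warning, some `m (p - 1) + 1` or fewer of its terms sum to zero. Dividing
their multiplicities by `p` gives a vector of norm at most `m` with integral image.

The images of the pieces are integer vectors with entries at most `mΔ`, and they sum to zero. By the
Steinitz lemma of Grinberg and Sevastyanov they can be ordered so that all partial sums lie in
`[-m²Δ, m²Δ]^m`. If there were more than `(2m²Δ + 1)^m` pieces, two partial sums would agree, and
the pieces between them would sum to a kernel element properly below `g`, against minimality. Hence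
`‖g‖₁ ≤ (2m²Δ + 1)^m (m + 1) ≤ (2m²Δ + 1)^(m + 1)`.

A circuit on the columns outside `I` is minimal among the integral kernel elements, so the same
argument applies to it with all columns designated integral.
-/

open Matrix BigOperators

/-- The ℓ₁-norm of a real vector. -/
def vnorm1 {ι : Type*} [Fintype ι] (x : ι → ℝ) : ℝ := ∑ i, |x i|

/-- The largest absolute value of an entry of an integer matrix. -/
def matNormInf {R C : Type*} [Fintype R] [Fintype C] (E : Matrix R C ℤ) : ℕ :=
  Finset.univ.sup fun p : R × C => (E p.1 p.2).natAbs

/-- `x` is conformal to `y` : componentwise `|x i| ≤ |y i|` and `x i * y i ≥ 0`. -/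
def ConformalTo {ι : Type*} (x y : ι → ℝ) : Prop :=
  ∀ i, |x i| ≤ |y i| ∧ 0 ≤ x i * y i

/-- The mixed kernel of an integer matrix `E` with integral columns `I`. -/
def MixedKer {R C : Type*} [Fintype C] [DecidableEq C]
    (E : Matrix R C ℤ) (I : Finset C) (x : C → ℝ) : Prop :=
  (E.map (Int.cast : ℤ → ℝ)).mulVec x = 0 ∧ ∀ i ∈ I, ∃ z : ℤ, x i = z

/-- `g` is a circuit of the integer matrix `A` : nonzero, integral, in the kernel,
with coprime entries and inclusion-minimal support among nonzero kernel elements. -/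
def IsCircuit {R C : Type*} [Fintype C] (A : Matrix R C ℤ) (g : C → ℤ) : Prop :=
  g ≠ 0 ∧ A.mulVec g = 0 ∧ (Finset.univ.gcd fun i => (g i).natAbs) = 1 ∧
  ∀ y : C → ℝ, y ≠ 0 → (A.map (Int.cast : ℤ → ℝ)).mulVec y = 0 →
    ¬ (Function.support y ⊂ Function.support fun i => ((g i : ℝ)))

/-- Membership in the mixed Graver basis `G_X(E)` of `E` w.r.t. integral columns `I`. -/
def InMixedGraver {R C : Type*} [Fintype C] [DecidableEq C]
    (E : Matrix R C ℤ) (I : Finset C) (g : C → ℝ) : Prop :=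
  (MixedKer E I g ∧ (∃ i ∈ I, g i ≠ 0) ∧
    ∀ y, MixedKer E I y → y ≠ 0 → y ≠ g → ¬ ConformalTo y g) ∨
  ((∀ i ∈ I, g i = 0) ∧
    ∃ gz : {i : C // i ∉ I} → ℤ, (∀ i : {i : C // i ∉ I}, g i.1 = gz i) ∧
      IsCircuit (E.submatrix id (Subtype.val : {i : C // i ∉ I} → C)) gz)

/-- `x = h + g` is a one-fat decomposition of `x ∈ ker_X(E)` with fat element `h`. -/
def OneFatDecomp {R C : Type*} [Fintype C] [DecidableEq C]
    (E : Matrix R C ℤ) (I : Finset C) (x h g : C → ℝ) : Prop :=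
  x = h + g ∧ ConformalTo h x ∧ ConformalTo g x ∧ MixedKer E I h ∧
  (E.map (Int.cast : ℤ → ℝ)).mulVec g = 0 ∧ (∀ i, ∃ z : ℤ, g i = z)

/-! ### Zero-sum subfamilies over a finite field -/

section ZeroSum

variable {K R : Type*} [Field K] [Fintype K] [Fintype R]

/-- The support of a nontrivial common zero of the polynomials `∑ t, f t i * X t ^ (q - 1)`, one for
each `i`, is a zero-sum subfamily; Chevalley–Warning provides such a zero. -/
lemma exists_zeroSum_subset {σ : Type*} (T : Finset σ) (f : σ → R → K)
    (hT : Fintype.card R * (Fintype.card K - 1) < T.card) :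
    ∃ U ⊆ T, U.Nonempty ∧ ∑ t ∈ U, f t = 0 := by
  classical
  obtain ⟨p, _⟩ := CharP.exists K
  have hp : p.Prime := CharP.char_is_prime K p
  have hq : Fintype.card K - 1 ≠ 0 := (Nat.sub_pos_of_lt Fintype.one_lt_card).ne'
  let F : R → MvPolynomial T K :=
    fun i => ∑ t : T, f t i • MvPolynomial.X t ^ (Fintype.card K - 1)
  have hdeg : ∑ i, (F i).totalDegree < Fintype.card T :=
    calc ∑ i, (F i).totalDegree ≤ ∑ _i : R, (Fintype.card K - 1) :=
          Finset.sum_le_sum fun i _ => MvPolynomial.totalDegree_finsetSum_le fun t _ =>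
            (MvPolynomial.totalDegree_smul_le ..).trans (MvPolynomial.totalDegree_X_pow ..).le
      _ < Fintype.card T := by simpa using hT
  have hdvd := char_dvd_card_solutions_of_fintype_sum_lt p hdeg
  rw [Fintype.card_eq_nat_card] at hdvd
  let z : {x : T → K // ∀ i, MvPolynomial.eval x (F i) = 0} := ⟨0, fun i => by simp [F, hq]⟩
  have : Nontrivial {x : T → K // ∀ i, MvPolynomial.eval x (F i) = 0} :=
    have : Nonempty {x : T → K // ∀ i, MvPolynomial.eval x (F i) = 0} := ⟨z⟩
    Finite.one_lt_card_iff_nontrivial.1 (hp.one_lt.trans_le (Nat.le_of_dvd Nat.card_pos hdvd))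
  obtain ⟨x, hx⟩ := exists_ne z
  obtain ⟨t, ht : x.1 t ≠ 0⟩ := Function.ne_iff.1 (Subtype.coe_ne_coe.2 hx)
  refine ⟨({t | x.1 t ≠ 0} : Finset T).map (.subtype _), ?_, ⟨t, ?_⟩, ?_⟩
  · simp +contextual [Finset.subset_iff]
  · simpa using ht
  · ext i
    have hpow : ∀ y : K, y ^ (Fintype.card K - 1) = if y ≠ 0 then 1 else 0 := fun y => by
      split_ifs with hy
      · exact FiniteField.pow_card_sub_one_eq_one y hy
      · rw [not_not.1 hy, zero_pow hq]
    simpa [F, hpow, Finset.sum_filter] using x.2 i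

lemma exists_zeroSum_le {C : Type*} [Fintype C] (v : C → R → K) (a : C → ℕ)
    (ha : Fintype.card R * (Fintype.card K - 1) < ∑ c, a c) :
    ∃ b ≤ a, b ≠ 0 ∧ ∑ c, b c ≤ Fintype.card R * (Fintype.card K - 1) + 1 ∧
      ∑ c, b c • v c = 0 := by
  classical
  -- the type `Σ c, Fin (a c)` lists each `c` with multiplicity `a c`
  obtain ⟨T, -, hT⟩ := Finset.exists_subset_card_eq
    (s := (Finset.univ : Finset (Σ c, Fin (a c))))
    (n := Fintype.card R * (Fintype.card K - 1) + 1) (by simpa using ha)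
  obtain ⟨U, hUT, ⟨t, ht⟩, hU⟩ := exists_zeroSum_subset T (fun t => v t.1) (by omega)
  refine ⟨fun c => (U.filter (·.1 = c)).card, fun c => ?_, ?_, ?_, ?_⟩
  · calc (U.filter (·.1 = c)).card
        ≤ ((Finset.univ : Finset (Fin (a c))).map
            (Function.Embedding.sigmaMk (β := fun c => Fin (a c)) c)).card := by
          refine Finset.card_le_card ?_
          rintro ⟨c', i⟩ h
          obtain ⟨-, rfl⟩ := Finset.mem_filter.1 h
          simp
      _ = a c := by simp
  · exact Function.ne_iff.2 ⟨t.1, Finset.card_ne_zero.2 ⟨t, by simpa using ht⟩⟩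
  · rw [← hT]
    exact (Finset.card_eq_sum_card_fiberwise (by simp)).symm.trans_le (Finset.card_le_card hUT)
  · simp only [← Finset.sum_const]
    exact (Finset.sum_fiberwise' U _ v).trans hU

end ZeroSum

/-! ### The Steinitz lemma -/

section Steinitz

variable {ι V : Type*} [Fintype ι]

/-- The polytope of weights in `[0, 1]`, supported in `S` and of total mass `c`, for which the
weighted sum of the vectors `x i` vanishes. The Grinberg–Sevastyanov argument removes elements from
`S` while keeping the polytope nonempty for `c = |S| - dim V`. -/
def steinitzWeights [AddCommGroup V] [Module ℝ V] (x : ι → V) (S : Finset ι) (c : ℝ) :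
    Set (ι → ℝ) :=
  {l | (∀ i, l i ∈ Set.Icc 0 1) ∧ (∀ i ∉ S, l i = 0) ∧ ∑ i, l i = c ∧ ∑ i, l i • x i = 0}

section Module

variable [AddCommGroup V] [Module ℝ V] {x : ι → V} {S : Finset ι} {l : ι → ℝ}

lemma sum_smul_eq_of_mem_steinitzWeights {W : Type*} [AddCommGroup W] [Module ℝ W] {c : ℝ}
    (hl : l ∈ steinitzWeights x S c) (y : ι → W) : ∑ i ∈ S, l i • y i = ∑ i, l i • y i :=
  Finset.sum_subset (Finset.subset_univ S) fun i _ hi => by simp [hl.2.1 i hi]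

lemma sum_eq_of_mem_steinitzWeights {c : ℝ} (hl : l ∈ steinitzWeights x S c) :
    ∑ i ∈ S, l i = c := by
  simpa [hl.2.2.1] using sum_smul_eq_of_mem_steinitzWeights hl (1 : ι → ℝ)

lemma smul_mem_steinitzWeights {c t : ℝ} (hl : l ∈ steinitzWeights x S c)
    (ht : t ∈ Set.Icc (0 : ℝ) 1) : t • l ∈ steinitzWeights x S (t * c) := by
  obtain ⟨h01, hS, hc, hx⟩ := hl
  refine ⟨fun i => ?_, fun i hi => by simp [hS i hi], ?_, ?_⟩
  · exact ⟨mul_nonneg ht.1 (h01 i).1, mul_le_one₀ ht.2 (h01 i).1 (h01 i).2⟩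
  · simp [← Finset.mul_sum, hc]
  · simp [mul_smul, ← Finset.smul_sum, hx]

lemma eventually_add_smul_mem_steinitzWeights {c : ℝ} (hl : l ∈ steinitzWeights x S c)
    {d : ι → ℝ} (hd : ∀ i, d i ≠ 0 → l i ∈ Set.Ioo 0 1) (hd0 : ∑ i, d i = 0)
    (hdx : ∑ i, d i • x i = 0) :
    ∀ᶠ ε in nhds (0 : ℝ), l + ε • d ∈ steinitzWeights x S c := by
  obtain ⟨h01, hS, hc, hx⟩ := hl
  have hev : ∀ᶠ ε in nhds (0 : ℝ), ∀ i, l i + ε * d i ∈ Set.Icc 0 1 := by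
    refine Filter.eventually_all.2 fun i => ?_
    by_cases hi : d i = 0
    · simp [hi, h01 i]
    have hcont : ContinuousAt (fun ε => l i + ε * d i) 0 := by fun_prop
    exact hcont.eventually_mem (Icc_mem_nhds (by simpa using (hd i hi).1)
      (by simpa using (hd i hi).2))
  filter_upwards [hev] with ε hε
  refine ⟨hε, fun i hi => ?_, ?_, ?_⟩
  · have : d i = 0 := by_contra fun h => (hd i h).1.ne' (hS i hi)
    simp [this, hS i hi]
  · simp [Finset.sum_add_distrib, ← Finset.mul_sum, hc, hd0]
  · simp [add_smul, mul_smul, Finset.sum_add_distrib, ← Finset.smul_sum, hx, hdx]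

lemma exists_affine_relation [FiniteDimensional ℝ V] (x : ι → V) (F : Finset ι)
    (hF : Module.finrank ℝ V + 1 < F.card) :
    ∃ d : ι → ℝ, d ≠ 0 ∧ (∀ i ∉ F, d i = 0) ∧ ∑ i, d i = 0 ∧ ∑ i, d i • x i = 0 := by
  classical
  have hdep : ¬ LinearIndepOn ℝ (fun i => ((1 : ℝ), x i)) (F : Set ι) := fun h => by
    have := h.fintype_card_le_finrank
    simp [Module.finrank_prod] at this
    omega
  obtain ⟨d, hd, i, hi, hdi⟩ := not_linearIndepOn_finset_iff.1 hdep
  simp only [Prod.smul_mk, smul_eq_mul, mul_one, Prod.ext_iff, Prod.fst_sum, Prod.snd_sum,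
    Prod.fst_zero, Prod.snd_zero] at hd
  refine ⟨fun i => if i ∈ F then d i else 0, ?_, ?_, ?_, ?_⟩
  · exact Function.ne_iff.2 ⟨i, by simpa [hi] using hdi⟩
  · simp +contextual
  · simpa using hd.1
  · simpa [ite_smul] using hd.2

lemma card_fractional_le_of_mem_extremePoints [FiniteDimensional ℝ V] {c : ℝ}
    (hl : l ∈ (steinitzWeights x S c).extremePoints ℝ) :
    (Finset.univ.filter fun i => l i ∈ Set.Ioo 0 1).card ≤ Module.finrank ℝ V + 1 := by
  by_contra! hcard
  obtain ⟨d, hd, hdF, hd0, hdx⟩ := exists_affine_relation x _ hcard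
  have hmem := eventually_add_smul_mem_steinitzWeights hl.1
    (fun i hi => by simpa using mt (hdF i) hi) hd0 hdx
  have hneg : ∀ᶠ ε in nhds (0 : ℝ), l - ε • d ∈ steinitzWeights x S c := by
    simpa [sub_eq_add_neg] using (continuous_neg.tendsto' (0 : ℝ) 0 neg_zero).eventually hmem
  obtain ⟨ε, ⟨hsub, hadd⟩, hε⟩ :=
    (((hneg.and hmem).filter_mono nhdsWithin_le_nhds).and
      (self_mem_nhdsWithin (s := Set.Ioi (0 : ℝ)))).exists
  have := hl.2 hadd hsub (openSegment_symm ℝ (l - _) _ ▸ mem_openSegment_sub_add l (ε • d))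
  simp_all [(show (0 : ℝ) < ε from hε).ne']

lemma exists_mem_eq_zero_of_mem_extremePoints [FiniteDimensional ℝ V]
    (hl : l ∈ (steinitzWeights x S (S.card - 1 - Module.finrank ℝ V)).extremePoints ℝ) :
    ∃ i ∈ S, l i = 0 := by
  by_contra! hne
  set F := Finset.univ.filter fun i => l i ∈ Set.Ioo 0 1 with hF
  have hFS : F ⊆ S := fun i hi =>
    by_contra fun hiS => (Finset.mem_filter.1 hi).2.1.ne' (hl.1.2.1 i hiS)
  have hmass : ∑ i ∈ F, (1 - l i) = Module.finrank ℝ V + 1 := by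
    rw [Finset.sum_subset hFS, Finset.sum_sub_distrib, sum_eq_of_mem_steinitzWeights hl.1]
    · simp
      ring
    · intro i hiS hiF
      have h0 := (hl.1.1 i).1.lt_of_ne' (hne i hiS)
      have h1 : ¬ l i < 1 := fun h => hiF (by simp [hF, h0, h])
      linarith [(hl.1.1 i).2]
  have hFne : F.Nonempty := Finset.nonempty_of_sum_ne_zero (by rw [hmass]; positivity)
  have hlt : ∑ i ∈ F, (1 - l i) < ∑ _i ∈ F, (1 : ℝ) :=
    Finset.sum_lt_sum_of_nonempty hFne fun i hi => by
      linarith [(Finset.mem_filter.1 hi).2.1]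
  rw [hmass, Finset.sum_const, nsmul_one] at hlt
  exact absurd (card_fractional_le_of_mem_extremePoints hl) (not_le.2 (by exact_mod_cast hlt))

end Module

section Normed

variable [NormedAddCommGroup V] [NormedSpace ℝ V] {x : ι → V} {S : Finset ι}

lemma isCompact_steinitzWeights (x : ι → V) (S : Finset ι) (c : ℝ) :
    IsCompact (steinitzWeights x S c) := by
  refine (isCompact_Icc (a := (0 : ι → ℝ)) (b := 1)).of_isClosed_subset ?_
    fun l hl => ⟨fun i => (hl.1 i).1, fun i => (hl.1 i).2⟩
  simp only [steinitzWeights, Set.ofPred_and, Set.ofPred_forall]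
  refine .inter ?_ (.inter ?_ (.inter ?_ ?_))
  · exact isClosed_iInter fun i => isClosed_Icc.preimage (continuous_apply i)
  · exact isClosed_iInter fun i => isClosed_iInter fun _ =>
      isClosed_eq (continuous_apply i) continuous_const
  · exact isClosed_eq (by fun_prop) continuous_const
  · exact isClosed_eq (by fun_prop) continuous_const

lemma steinitzWeights_erase_nonempty [FiniteDimensional ℝ V] [DecidableEq ι]
    (hcard : Module.finrank ℝ V < S.card)
    (hS : (steinitzWeights x S (S.card - Module.finrank ℝ V)).Nonempty) :
    ∃ i ∈ S, (steinitzWeights x (S.erase i)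
      ((S.erase i).card - Module.finrank ℝ V)).Nonempty := by
  have hcard' : (Module.finrank ℝ V : ℝ) + 1 ≤ S.card := by exact_mod_cast hcard
  have hne : (steinitzWeights x S (S.card - 1 - Module.finrank ℝ V)).Nonempty := by
    obtain ⟨l, hl⟩ := hS
    have hpos : (0 : ℝ) < S.card - Module.finrank ℝ V := by linarith
    have h := smul_mem_steinitzWeights hl
      (t := (S.card - 1 - Module.finrank ℝ V) / (S.card - Module.finrank ℝ V))
      ⟨div_nonneg (by linarith) hpos.le, (div_le_one hpos).2 (by linarith)⟩
    rw [div_mul_cancel₀ _ hpos.ne'] at h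
    exact ⟨_, h⟩
  obtain ⟨l, hl⟩ := (isCompact_steinitzWeights x S _).extremePoints_nonempty hne
  obtain ⟨i, hi, hli⟩ := exists_mem_eq_zero_of_mem_extremePoints hl
  obtain ⟨h01, hS, hc, hx⟩ := hl.1
  refine ⟨i, hi, l, h01, fun k hk => ?_, ?_, hx⟩
  · by_cases hki : k = i
    · rw [hki, hli]
    · exact hS k fun h => hk (Finset.mem_erase.2 ⟨hki, h⟩)
  · rw [hc, Finset.card_erase_of_mem hi, Nat.cast_sub (by omega), Nat.cast_one]

/-- Subtracting the vanishing weighted sum leaves the weights `1 - l i ≥ 0` of total mass `d`. -/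
lemma norm_sum_le_of_steinitzWeights_nonempty {d r : ℝ} (hx : ∀ i ∈ S, ‖x i‖ ≤ r)
    (hS : (steinitzWeights x S (S.card - d)).Nonempty) : ‖∑ i ∈ S, x i‖ ≤ d * r := by
  obtain ⟨l, hl⟩ := hS
  calc ‖∑ i ∈ S, x i‖ = ‖∑ i ∈ S, (1 - l i) • x i‖ := by
        simp only [sub_smul, one_smul, Finset.sum_sub_distrib,
          sum_smul_eq_of_mem_steinitzWeights hl, hl.2.2.2, sub_zero]
    _ ≤ ∑ i ∈ S, (1 - l i) * r := norm_sum_le_of_le _ fun i hi => by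
        have h1 : 0 ≤ 1 - l i := sub_nonneg.2 (hl.1 i).2
        rw [norm_smul, Real.norm_of_nonneg h1]
        exact mul_le_mul_of_nonneg_left (hx i hi) h1
    _ = d * r := by
        rw [← Finset.sum_mul, Finset.sum_sub_distrib, sum_eq_of_mem_steinitzWeights hl]
        simp

lemma steinitzWeights_univ_nonempty {d : ℝ} (hd : 0 ≤ d) (hcard : d < Fintype.card ι)
    (hsum : ∑ i, x i = 0) : (steinitzWeights x Finset.univ (Fintype.card ι - d)).Nonempty := by
  have hpos : (0 : ℝ) < Fintype.card ι := hd.trans_lt hcard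
  refine ⟨fun _ => (Fintype.card ι - d) / Fintype.card ι, fun _ => ?_, by simp, ?_, ?_⟩
  · exact ⟨div_nonneg (by linarith) hpos.le, (div_le_one hpos).2 (by linarith)⟩
  · simp [mul_div_cancel₀ _ hpos.ne']
  · rw [← Finset.smul_sum, hsum, smul_zero]

end Normed

lemma exists_isChain_of_erase {α : Type*} [DecidableEq α] (P : Finset α → Prop)
    (hP : ∀ S, P S → S.Nonempty → ∃ i ∈ S, P (S.erase i)) (S : Finset α) (hS : P S) :
    ∃ C : Finset (Finset α), C.card = S.card ∧ (∀ T ∈ C, P T ∧ T.Nonempty ∧ T ⊆ S) ∧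
      IsChain (· ⊆ ·) (C : Set (Finset α)) := by
  induction S using Finset.strongInduction with
  | H S ih =>
    obtain rfl | hne := S.eq_empty_or_nonempty
    · exact ⟨∅, by simp⟩
    obtain ⟨i, hi, hPi⟩ := hP S hS hne
    obtain ⟨C, hcard, hC, hchain⟩ := ih _ (Finset.erase_ssubset hi) hPi
    have hsub : ∀ T ∈ C, T ⊆ S := fun T hT => (hC T hT).2.2.trans (Finset.erase_subset _ _)
    have hSC : S ∉ C := fun h => Finset.notMem_erase i S ((hC S h).2.2 hi)
    refine ⟨insert S C, ?_, ?_, ?_⟩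
    · rw [Finset.card_insert_of_notMem hSC, hcard, Finset.card_erase_add_one hi]
    · rw [Finset.forall_mem_insert]
      exact ⟨⟨hS, hne, subset_rfl⟩, fun T hT => ⟨(hC T hT).1, (hC T hT).2.1, hsub T hT⟩⟩
    · rw [Finset.coe_insert]
      exact hchain.insert fun T hT _ => Or.inr (hsub T hT)

/-- The Steinitz lemma with the constant `dim V`. The ordering of the vectors is encoded as the
chain `C` of its nonempty initial segments. -/
theorem exists_isChain_norm_sum_le [NormedAddCommGroup V] [NormedSpace ℝ V]
    [FiniteDimensional ℝ V] {x : ι → V} {r : ℝ} (hx : ∀ i, ‖x i‖ ≤ r) (hsum : ∑ i, x i = 0) :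
    ∃ C : Finset (Finset ι), C.card = Fintype.card ι ∧
      (∀ T ∈ C, T.Nonempty ∧ ‖∑ i ∈ T, x i‖ ≤ Module.finrank ℝ V * r) ∧
      IsChain (· ⊆ ·) (C : Set (Finset ι)) := by
  classical
  obtain ⟨C, hcard, hC, hchain⟩ := exists_isChain_of_erase
    (fun S : Finset ι => S.card ≤ Module.finrank ℝ V ∨
      (steinitzWeights x S (S.card - Module.finrank ℝ V)).Nonempty)
    (fun S hS ⟨i, hi⟩ => by
      by_cases hle : S.card ≤ Module.finrank ℝ V
      · exact ⟨i, hi, Or.inl (Finset.card_erase_le.trans hle)⟩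
      · obtain ⟨i, hi, h⟩ := steinitzWeights_erase_nonempty (not_le.1 hle) (hS.resolve_left hle)
        exact ⟨i, hi, Or.inr h⟩)
    Finset.univ
    (or_iff_not_imp_left.2 fun h => steinitzWeights_univ_nonempty (Nat.cast_nonneg _)
      (by exact_mod_cast not_le.1 h) hsum)
  refine ⟨C, hcard, fun T hT => ⟨(hC T hT).2.1, ?_⟩, hchain⟩
  rcases (hC T hT).1 with hle | hne
  · obtain ⟨i, -⟩ := (hC T hT).2.1
    have hr : 0 ≤ r := (norm_nonneg _).trans (hx i)
    calc ‖∑ i ∈ T, x i‖ ≤ T.card * r := by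
          simpa using norm_sum_le_of_le T fun i _ => hx i
      _ ≤ Module.finrank ℝ V * r := by gcongr
  · exact norm_sum_le_of_steinitzWeights_nonempty (fun i _ => hx i) hne

end Steinitz

lemma exists_ne_univ_sum_eq_zero {ι R : Type*} [Fintype ι] [Fintype R] {v : ι → R → ℤ} {B : ℕ}
    (hv : ∀ i j, |v i j| ≤ B) (hsum : ∑ i, v i = 0)
    (hcard : (2 * (Fintype.card R * B) + 1) ^ Fintype.card R < Fintype.card ι) :
    ∃ T : Finset ι, T.Nonempty ∧ T ≠ Finset.univ ∧ ∑ i ∈ T, v i = 0 := by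
  classical
  set D : ℕ := Fintype.card R * B with hD
  obtain ⟨C, hC, hbound, hchain⟩ := exists_isChain_norm_sum_le
    (x := fun i j => (v i j : ℝ)) (r := B)
    (fun i => (pi_norm_le_iff_of_nonneg (Nat.cast_nonneg B)).2 fun j => by
      rw [Real.norm_eq_abs]
      exact_mod_cast hv i j)
    (by
      ext j
      have := congrFun hsum j
      simp only [Finset.sum_apply, Pi.zero_apply] at this ⊢
      exact_mod_cast this)
  have hbox : ∀ T ∈ C, ∑ i ∈ T, v i ∈
      Fintype.piFinset fun _ : R => Finset.Icc (-(D : ℤ)) D := by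
    intro T hT
    refine Fintype.mem_piFinset.2 fun j => Finset.mem_Icc.2 (abs_le.1 ?_)
    have h := (norm_le_pi_norm _ j).trans (hbound T hT).2
    rw [Module.finrank_fintype_fun_eq_card, Real.norm_eq_abs, Finset.sum_apply] at h
    rw [hD, Finset.sum_apply]
    exact_mod_cast h
  have hcardbox : (Fintype.piFinset fun _ : R => Finset.Icc (-(D : ℤ)) D).card < C.card := by
    have hside : ((D : ℤ) + 1 - -D).toNat = 2 * D + 1 := by omega
    simpa only [Fintype.card_piFinset, Int.card_Icc, hside, Finset.prod_const,
      Finset.card_univ, hC] using hcard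
  have hsdiff : ∀ S ∈ C, ∀ T ∈ C, S ≠ T → S ⊆ T → ∑ i ∈ S, v i = ∑ i ∈ T, v i →
      ∃ U : Finset ι, U.Nonempty ∧ U ≠ Finset.univ ∧ ∑ i ∈ U, v i = 0 := by
    intro S hS T _ hne hST heq
    obtain ⟨i, hi⟩ := (hbound S hS).1
    refine ⟨T \ S, Finset.sdiff_nonempty.2 fun h => hne (hST.antisymm h), fun h => ?_, ?_⟩
    · exact (Finset.mem_sdiff.1 (h ▸ Finset.mem_univ i)).2 hi
    · rw [Finset.sum_sdiff_eq_sub hST, heq, sub_self]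
  obtain ⟨S, hS, T, hT, hne, heq⟩ :=
    Finset.exists_ne_map_eq_of_card_lt_of_maps_to hcardbox hbox
  rcases hchain hS hT hne with h | h
  · exact hsdiff S hS T hT hne h heq
  · exact hsdiff T hT S hS hne.symm h heq.symm

/-! ### Decomposition into pieces -/

/-- The integers inside `ℝ`, as a subring, so that integrality is inherited by sums and
differences. -/
def intSubring : Subring ℝ := (Int.castRingHom ℝ).range

lemma mem_intSubring {x : ℝ} : x ∈ intSubring ↔ ∃ z : ℤ, x = z := by
  simp [intSubring, eq_comm]

lemma one_le_of_mem_intSubring {x : ℝ} (hx : x ∈ intSubring) (hpos : 0 < x) : 1 ≤ x := by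
  obtain ⟨z, rfl⟩ := mem_intSubring.1 hx
  exact_mod_cast hpos

lemma single_one_mem_intSubring {C : Type*} [DecidableEq C] (c c' : C) :
    (Pi.single c 1 : C → ℝ) c' ∈ intSubring := by
  rw [Pi.single_apply]
  split_ifs
  exacts [one_mem _, zero_mem _]

section Pieces

variable {R C : Type*} [Fintype R] [Fintype C] {E : Matrix R C ℤ} {I : Finset C}

lemma abs_entry_le_matNormInf (E : Matrix R C ℤ) (j : R) (c : C) :
    |(E j c : ℝ)| ≤ matNormInf E := by
  have h : (E j c).natAbs ≤ matNormInf E :=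
    Finset.le_sup (f := fun p : R × C => (E p.1 p.2).natAbs) (Finset.mem_univ (j, c))
  rw [← Int.cast_abs, Int.abs_eq_natAbs]
  exact_mod_cast h

lemma abs_mulVec_le (E : Matrix R C ℤ) {x : C → ℝ} (hx : 0 ≤ x) (j : R) :
    |(E.map Int.cast *ᵥ x) j| ≤ matNormInf E * ∑ c, x c := by
  rw [Finset.mul_sum]
  refine (Finset.abs_sum_le_sum_abs _ _).trans (Finset.sum_le_sum fun c _ => ?_)
  rw [abs_mul, abs_of_nonneg (hx c)]
  exact mul_le_mul_of_nonneg_right (abs_entry_le_matNormInf E j c) (hx c)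

/-- The building blocks of nonnegative kernel elements: nonzero nonnegative vectors `w`, integral on
`I`, with integral image under `E`. The last condition says `‖w‖₁ < r + 1 / ‖E‖∞` for `r` rows; it
forces the entries of `E w`, which are integers, to be at most `r * ‖E‖∞` in absolute value. -/
structure IsPiece (E : Matrix R C ℤ) (I : Finset C) (w : C → ℝ) : Prop where
  nonneg : 0 ≤ w
  ne_zero : w ≠ 0
  integral : ∀ i ∈ I, w i ∈ intSubring
  image_integral : ∀ j, (E.map Int.cast *ᵥ w) j ∈ intSubring
  norm_lt : matNormInf E * ∑ c, w c < Fintype.card R * matNormInf E + 1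

lemma IsPiece.exists_image {w : C → ℝ} (hw : IsPiece E I w) :
    ∃ v : R → ℤ, (∀ j, (E.map Int.cast *ᵥ w) j = v j) ∧
      ∀ j, |v j| ≤ (Fintype.card R * matNormInf E : ℕ) := by
  choose v hv using fun j => mem_intSubring.1 (hw.image_integral j)
  refine ⟨v, hv, fun j => Int.lt_add_one_iff.1 ?_⟩
  have h := (abs_mulVec_le E hw.nonneg j).trans_lt hw.norm_lt
  rw [hv j] at h
  exact_mod_cast h

lemma IsPiece.sum_le {w : C → ℝ} (hw : IsPiece E I w) (hE : matNormInf E ≠ 0) :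
    ∑ c, w c ≤ Fintype.card R + 1 := by
  have hpos : (1 : ℝ) ≤ matNormInf E := by exact_mod_cast Nat.one_le_iff_ne_zero.2 hE
  refine le_of_mul_le_mul_left (hw.norm_lt.le.trans ?_) (zero_lt_one.trans_le hpos)
  linarith

lemma isPiece_single [DecidableEq C] (E : Matrix R C ℤ) (I : Finset C) (c : C) :
    IsPiece E I (Pi.single c 1) where
  nonneg := Pi.single_nonneg.2 zero_le_one
  ne_zero := by simp
  integral i _ := single_one_mem_intSubring c i
  image_integral j := mem_intSubring.2 ⟨E j c, by simp⟩
  norm_lt := by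
    rcases isEmpty_or_nonempty R with _ | _
    · simp [matNormInf]
    · have h : (1 : ℝ) ≤ Fintype.card R := by exact_mod_cast Fintype.card_pos
      simp only [Finset.sum_pi_single', Finset.mem_univ, if_true, mul_one]
      nlinarith [(matNormInf E).cast_nonneg (α := ℝ)]

/-- The terms of the zero-sum sequence in `(ℤ/p)^R` are columns of `E`, each column `c` being
available `⌊p x_c⌋` times. -/
lemma exists_le_image_integral [Nonempty R] (E : Matrix R C ℤ) (p : ℕ) [Fact p.Prime]
    {x : C → ℝ} (hx : 0 ≤ x) (hxp : Fintype.card R * (p - 1) < ∑ c, ⌊p * x c⌋₊) :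
    ∃ y, 0 ≤ y ∧ y ≤ x ∧ 1 / p ≤ ∑ c, y c ∧ ∑ c, y c ≤ Fintype.card R ∧
      ∀ j, (E.map Int.cast *ᵥ y) j ∈ intSubring := by
  have hp : 0 < p := (Fact.out : p.Prime).pos
  have hp0 : (0 : ℝ) < p := by exact_mod_cast hp
  obtain ⟨b, hbx, hb0, hbcard, hb⟩ := exists_zeroSum_le (K := ZMod p)
    (fun c (j : R) => (E j c : ZMod p)) (fun c => ⌊p * x c⌋₊) (by rwa [ZMod.card])
  rw [ZMod.card] at hbcard
  refine ⟨fun c => b c / p, fun c => ?_, fun c => ?_, ?_, ?_, fun j => ?_⟩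
  · positivity
  · rw [div_le_iff₀' hp0]
    exact (Nat.cast_le.2 (hbx c)).trans (Nat.floor_le (mul_nonneg hp0.le (hx c)))
  · obtain ⟨c, hc⟩ := Function.ne_iff.1 hb0
    rw [← Finset.sum_div]
    gcongr
    exact_mod_cast (Nat.one_le_iff_ne_zero.2 hc).trans
      (Finset.single_le_sum (fun _ _ => Nat.zero_le _) (Finset.mem_univ c))
  · have hle : ∑ c, b c ≤ Fintype.card R * p :=
      calc ∑ c, b c ≤ Fintype.card R * (p - 1) + Fintype.card R := by
            have := Fintype.card_pos (α := R)
            omega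
        _ = Fintype.card R * p := by rw [← Nat.mul_succ, Nat.succ_eq_add_one,
            Nat.sub_add_cancel hp]
    rw [← Finset.sum_div, div_le_iff₀ hp0]
    exact_mod_cast hle
  · have hdvd : (p : ℤ) ∣ ∑ c, b c * E j c := by
      rw [← ZMod.intCast_zmod_eq_zero_iff_dvd]
      simpa using congrFun hb j
    obtain ⟨k, hk⟩ := hdvd
    refine mem_intSubring.2 ⟨k, ?_⟩
    calc (E.map Int.cast *ᵥ fun c => (b c : ℝ) / p) j
        = ((∑ c, b c * E j c : ℤ) : ℝ) / p := by
          simp [mulVec, dotProduct, Finset.sum_div, mul_comm, mul_div_assoc]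
      _ = k := by
          rw [hk, Int.cast_mul, Int.cast_natCast, mul_div_cancel_left₀ _ hp0.ne']

lemma card_mul_lt_sum_floor {p : ℕ} (hp : matNormInf E * Fintype.card C < p) {x : C → ℝ}
    (hlarge : (Fintype.card R * matNormInf E + 1 : ℝ) ≤ matNormInf E * ∑ c, x c) :
    Fintype.card R * (p - 1) < ∑ c, ⌊p * x c⌋₊ := by
  have hfloor : p * ∑ c, x c - Fintype.card C ≤ ((∑ c, ⌊p * x c⌋₊ : ℕ) : ℝ) := by
    calc p * ∑ c, x c - Fintype.card C = ∑ c, (p * x c - 1) := by simp [Finset.mul_sum]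
      _ ≤ ∑ c, (⌊p * x c⌋₊ : ℝ) := Finset.sum_le_sum fun c _ => (Nat.sub_one_lt_floor _).le
      _ = ((∑ c, ⌊p * x c⌋₊ : ℕ) : ℝ) := (Nat.cast_sum _ _).symm
  have hp' : (matNormInf E * Fintype.card C : ℝ) < p := by exact_mod_cast hp
  have hlt : (matNormInf E * (Fintype.card R * p) : ℝ) <
      matNormInf E * (∑ c, ⌊p * x c⌋₊ : ℕ) :=
    calc (matNormInf E * (Fintype.card R * p) : ℝ)
        < p * (Fintype.card R * matNormInf E + 1) - matNormInf E * Fintype.card C := by linarith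
      _ ≤ p * (matNormInf E * ∑ c, x c) - matNormInf E * Fintype.card C := by gcongr
      _ = matNormInf E * (p * ∑ c, x c - Fintype.card C) := by ring
      _ ≤ matNormInf E * (∑ c, ⌊p * x c⌋₊ : ℕ) := by gcongr
  have hlt' : Fintype.card R * p < ∑ c, ⌊p * x c⌋₊ := by
    exact_mod_cast lt_of_mul_lt_mul_left hlt (Nat.cast_nonneg _)
  exact (Nat.mul_le_mul_left _ (Nat.sub_le p 1)).trans_lt hlt'

lemma isPiece_or_exists_isPiece_le {p : ℕ} [Fact p.Prime]
    (hp : matNormInf E * Fintype.card C < p) {x : C → ℝ} (hx : 0 ≤ x) (hx0 : x ≠ 0)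
    (hI : ∀ i ∈ I, x i ∈ intSubring) (hE : ∀ j, (E.map Int.cast *ᵥ x) j ∈ intSubring) :
    IsPiece E I x ∨ ∃ w, IsPiece E I w ∧ w ≤ x ∧ 1 / p ≤ ∑ c, w c := by
  classical
  by_cases hsmall : matNormInf E * ∑ c, x c < Fintype.card R * matNormInf E + 1
  · exact Or.inl ⟨hx, hx0, hI, hE, hsmall⟩
  right
  by_cases hxI : ∃ i ∈ I, x i ≠ 0
  · obtain ⟨i, hi, hxi⟩ := hxI
    refine ⟨Pi.single i 1, isPiece_single E I i, ?_, ?_⟩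
    · exact update_le_iff.2
        ⟨one_le_of_mem_intSubring (hI i hi) ((hx i).lt_of_ne' hxi), fun c _ => hx c⟩
    · simpa using Nat.cast_inv_le_one p
  push Not at hsmall hxI
  have : Nonempty R := by
    by_contra! hR
    simp [matNormInf] at hsmall
    linarith
  obtain ⟨y, hy, hyx, hpy, hyR, hEy⟩ :=
    exists_le_image_integral E p hx (card_mul_lt_sum_floor hp hsmall)
  refine ⟨y, ⟨hy, ?_, fun i hi => ?_, hEy, ?_⟩, hyx, hpy⟩
  · rintro rfl
    have : (0 : ℝ) < 1 / p := by have := (Fact.out : p.Prime).pos; positivity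
    simp at hpy this
    linarith
  · rw [le_antisymm ((hyx i).trans_eq (hxI i hi)) (hy i)]
    exact zero_mem _
  · have : matNormInf E * ∑ c, y c ≤ matNormInf E * Fintype.card R := by gcongr
    linarith

theorem exists_sum_isPiece_eq {x : C → ℝ} (hx : 0 ≤ x) (hI : ∀ i ∈ I, x i ∈ intSubring)
    (hE : ∀ j, (E.map Int.cast *ᵥ x) j ∈ intSubring) :
    ∃ (K : ℕ) (w : Fin K → C → ℝ), (∀ k, IsPiece E I (w k)) ∧ ∑ k, w k = x := by
  obtain ⟨p, hpE, hp⟩ := Nat.exists_infinite_primes (matNormInf E * Fintype.card C + 1)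
  have : Fact p.Prime := ⟨hp⟩
  have hp0 : (0 : ℝ) < p := by exact_mod_cast hp.pos
  obtain ⟨n, hn⟩ := exists_nat_ge (p * ∑ c, x c)
  induction n generalizing x with
  | zero =>
    have hsum : ∑ c, x c ≤ 0 := nonpos_of_mul_nonpos_right (by simpa using hn) hp0
    have hzero : x = 0 := (Fintype.sum_eq_zero_iff_of_nonneg hx).1
      (hsum.antisymm (Finset.sum_nonneg fun c _ => hx c))
    exact ⟨0, ![], by simp, by simp [hzero]⟩
  | succ n ih =>
    obtain rfl | hx0 := eq_or_ne x 0
    · exact ⟨0, ![], by simp, by simp⟩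
    obtain hpiece | ⟨y, hy, hyx, hpy⟩ := isPiece_or_exists_isPiece_le hpE hx hx0 hI hE
    · exact ⟨1, ![x], by simpa using hpiece, by simp⟩
    have hnext : p * ∑ c, (x - y) c ≤ n := by
      have := (div_le_iff₀' hp0).1 hpy
      push_cast at hn
      simp only [Pi.sub_apply, Finset.sum_sub_distrib]
      linarith
    obtain ⟨K, w, hw, hsum⟩ := ih (sub_nonneg.2 hyx)
      (fun i hi => sub_mem (hI i hi) (hy.integral i hi))
      (fun j => by
        rw [mulVec_sub]
        exact sub_mem (hE j) (hy.image_integral j)) hnext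
    refine ⟨K + 1, Fin.cons y w, Fin.cases hy hw, ?_⟩
    rw [Fin.sum_univ_succ]
    simp [hsum]

end Pieces

/-! ### Conformally minimal kernel elements -/

lemma conformalTo_of_nonneg_of_le {C : Type*} {x y : C → ℝ} (hx : 0 ≤ x) (hxy : x ≤ y) :
    ConformalTo x y := fun c =>
  ⟨abs_le_abs_of_nonneg (hx c) (hxy c), mul_nonneg (hx c) ((hx c).trans (hxy c))⟩

section Minimal

variable {R C : Type*} [Fintype C] [DecidableEq C] {E : Matrix R C ℤ} {I : Finset C}
  {g : C → ℝ}

/-- A nonzero element of the mixed kernel to which no other nonzero element is conformal. Both kinds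
of elements of the mixed Graver basis are of this form, for `I` itself and for the set of all
columns respectively. -/
structure IsConformallyMinimal (E : Matrix R C ℤ) (I : Finset C) (g : C → ℝ) : Prop where
  mem : MixedKer E I g
  ne_zero : g ≠ 0
  eq_of_conformalTo : ∀ y, MixedKer E I y → y ≠ 0 → ConformalTo y g → y = g

lemma mixedKer_iff {x : C → ℝ} :
    MixedKer E I x ↔ E.map Int.cast *ᵥ x = 0 ∧ ∀ i ∈ I, x i ∈ intSubring := by
  simp only [MixedKer, mem_intSubring]

variable [Fintype R]

lemma IsConformallyMinimal.sum_le_one (hg : IsConformallyMinimal E I g) (hg0 : 0 ≤ g)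
    (hE : matNormInf E = 0) : ∑ c, g c ≤ 1 := by
  obtain ⟨c, hc⟩ := Function.ne_iff.1 hg.ne_zero
  have hpos : 0 < min 1 (g c) := lt_min zero_lt_one ((hg0 c).lt_of_ne' hc)
  have hzero : E = 0 := by
    ext j c
    simpa [hE] using abs_entry_le_matNormInf E j c
  have hint : ∀ i ∈ I, (Pi.single c (min 1 (g c)) : C → ℝ) i ∈ intSubring := by
    intro i hi
    rw [Pi.single_apply]
    split_ifs with h
    · subst h
      rcases min_choice 1 (g i) with h | h <;> rw [h]
      exacts [one_mem _, (mixedKer_iff.1 hg.mem).2 i hi]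
    · exact zero_mem _
  have heq : Pi.single c (min 1 (g c)) = g :=
    hg.eq_of_conformalTo _
      (mixedKer_iff.2 ⟨by rw [hzero, Matrix.map_zero _ Int.cast_zero, zero_mulVec], hint⟩)
      (Pi.single_ne_zero_iff.2 hpos.ne')
      (conformalTo_of_nonneg_of_le (Pi.single_nonneg.2 hpos.le)
        (update_le_iff.2 ⟨min_le_right _ _, fun i _ => hg0 i⟩))
  calc ∑ i, g i = ∑ i, (Pi.single c (min 1 (g c)) : C → ℝ) i := by rw [heq]
    _ = min 1 (g c) := Finset.sum_pi_single' _ _ _ |>.trans (if_pos (Finset.mem_univ c))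
    _ ≤ 1 := min_le_left _ _

/-- A proper nonempty subfamily of pieces with images summing to `0` would sum to a kernel element
strictly below `g`. -/
lemma IsConformallyMinimal.card_le {ι : Type*} [Fintype ι] {w : ι → C → ℝ}
    (hg : IsConformallyMinimal E I g) (hw : ∀ k, IsPiece E I (w k)) (hsum : ∑ k, w k = g) :
    Fintype.card ι ≤
      (2 * (Fintype.card R * (Fintype.card R * matNormInf E)) + 1) ^ Fintype.card R := by
  classical
  by_contra! hlt
  choose v hv hvB using fun k => (hw k).exists_image
  have himage (T : Finset ι) (j : R) :
      (E.map Int.cast *ᵥ ∑ k ∈ T, w k) j = ((∑ k ∈ T, v k) j : ℤ) := by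
    simp [Matrix.mulVec_sum, hv]
  have hv0 : ∑ k, v k = 0 := by
    ext j
    have h := congrFun hg.mem.1 j
    rw [← hsum, himage, Pi.zero_apply] at h
    exact_mod_cast h
  obtain ⟨T, ⟨k, hk⟩, hTuniv, hT⟩ := exists_ne_univ_sum_eq_zero hvB hv0 hlt
  obtain ⟨l, hl⟩ : ∃ l, l ∉ T := by
    simpa only [ne_eq, Finset.eq_univ_iff_forall, not_forall] using hTuniv
  have hker : MixedKer E I (∑ k ∈ T, w k) := mixedKer_iff.2
    ⟨funext fun j => by rw [himage, hT]; simp, fun i hi => by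
      rw [Finset.sum_apply]
      exact sum_mem fun k _ => (hw k).integral i hi⟩
  have hne : ∑ k ∈ T, w k ≠ 0 := fun h =>
    (hw k).ne_zero ((Finset.sum_eq_zero_iff_of_nonneg fun k _ => (hw k).nonneg).1 h k hk)
  have heq : ∑ k ∈ T, w k = g := hg.eq_of_conformalTo _ hker hne <|
    conformalTo_of_nonneg_of_le (Finset.sum_nonneg fun k _ => (hw k).nonneg)
      ((Finset.sum_le_univ_sum_of_nonneg fun k => (hw k).nonneg).trans_eq hsum)
  have hcompl : ∑ k ∈ Tᶜ, w k = 0 := by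
    rw [← Finset.sum_add_sum_compl T, heq] at hsum
    exact left_eq_add.1 hsum.symm
  exact (hw l).ne_zero ((Finset.sum_eq_zero_iff_of_nonneg fun k _ => (hw k).nonneg).1 hcompl l
    (Finset.mem_compl.2 hl))

lemma IsConformallyMinimal.sum_le (hg : IsConformallyMinimal E I g) (hg0 : 0 ≤ g) :
    ∑ c, g c ≤
      (2 * (Fintype.card R : ℝ) ^ 2 * matNormInf E + 1) ^ (Fintype.card R + 1) := by
  set r := Fintype.card R
  set Δ := matNormInf E
  by_cases hE : Δ = 0
  · simpa [hE] using hg.sum_le_one hg0 hE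
  have hgker := mixedKer_iff.1 hg.mem
  obtain ⟨K, w, hw, hsum⟩ := exists_sum_isPiece_eq hg0 hgker.2 fun j => by
    rw [hgker.1]
    exact zero_mem _
  have hK : K ≤ (2 * r ^ 2 * Δ + 1) ^ r := by
    simpa [sq, mul_assoc] using hg.card_le hw hsum
  have hr : r + 1 ≤ 2 * r ^ 2 * Δ + 1 := by
    nlinarith [Nat.one_le_iff_ne_zero.2 hE, Nat.le_self_pow two_ne_zero r]
  calc ∑ c, g c = ∑ k, ∑ c, w k c := by
        rw [← hsum, Finset.sum_comm]
        simp only [Finset.sum_apply]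
    _ ≤ ∑ _k : Fin K, ((r : ℝ) + 1) := Finset.sum_le_sum fun k _ => (hw k).sum_le hE
    _ = (K * (r + 1) : ℕ) := by simp; ring
    _ ≤ ((2 * r ^ 2 * Δ + 1) ^ r * (2 * r ^ 2 * Δ + 1) : ℕ) := by gcongr
    _ = (2 * (r : ℝ) ^ 2 * Δ + 1) ^ (r + 1) := by push_cast; ring

end Minimal

/-! ### Sign changes -/

lemma abs_intUnits_smul (u : ℤˣ) (a : ℝ) : |u • a| = |a| := by
  rcases Int.units_eq_one_or u with rfl | rfl <;> simp [Units.smul_def]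

lemma intUnits_smul_mem_intSubring_iff (u : ℤˣ) {a : ℝ} :
    u • a ∈ intSubring ↔ a ∈ intSubring := by
  rcases Int.units_eq_one_or u with rfl | rfl <;> simp [Units.smul_def]

section SignChange

variable {C : Type*}

lemma intUnits_smul_smul_self (s : C → ℤˣ) (x : C → ℝ) : s • s • x = x := by
  ext c
  simp [smul_smul, Int.units_mul_self]

lemma exists_nonneg_intUnits_smul (x : C → ℝ) : ∃ s : C → ℤˣ, 0 ≤ s • x := by
  refine ⟨fun c => if 0 ≤ x c then 1 else -1, fun c => ?_⟩
  by_cases h : 0 ≤ x c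
  · simp [h]
  · simp [h, Units.smul_def, (not_le.1 h).le]

lemma conformalTo_intUnits_smul_iff (s : C → ℤˣ) {x y : C → ℝ} :
    ConformalTo (s • x) y ↔ ConformalTo x (s • y) := by
  refine forall_congr' fun c => ?_
  simp only [Pi.smul_apply', abs_intUnits_smul, smul_mul_assoc, mul_smul_comm]

variable {R : Type*} [Fintype C]

lemma vnorm1_intUnits_smul (s : C → ℤˣ) (x : C → ℝ) : vnorm1 (s • x) = vnorm1 x := by
  simp only [vnorm1, Pi.smul_apply', abs_intUnits_smul]

variable [DecidableEq C] {E : Matrix R C ℤ} {I : Finset C} {g : C → ℝ}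

lemma matNormInf_mul_diagonal_intUnits [Fintype R] (E : Matrix R C ℤ) (s : C → ℤˣ) :
    matNormInf (E * diagonal fun c => (s c : ℤ)) = matNormInf E := by
  simp [matNormInf, mul_diagonal, Int.natAbs_mul]

lemma mixedKer_mul_diagonal_intUnits_iff (s : C → ℤˣ) {x : C → ℝ} :
    MixedKer (E * diagonal fun c => (s c : ℤ)) I x ↔ MixedKer E I (s • x) := by
  have himage :
      (E * diagonal fun c => (s c : ℤ)).map Int.cast *ᵥ x = E.map Int.cast *ᵥ (s • x) := by
    ext j
    simp [mulVec, dotProduct, mul_diagonal, Units.smul_def, mul_assoc]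
  simp only [mixedKer_iff, himage, Pi.smul_apply', intUnits_smul_mem_intSubring_iff]

lemma IsConformallyMinimal.intUnits_smul (hg : IsConformallyMinimal E I g) (s : C → ℤˣ) :
    IsConformallyMinimal (E * diagonal fun c => (s c : ℤ)) I (s • g) where
  mem := by
    rw [mixedKer_mul_diagonal_intUnits_iff, intUnits_smul_smul_self]
    exact hg.mem
  ne_zero h := hg.ne_zero <| by rw [← intUnits_smul_smul_self s g, h, smul_zero]
  eq_of_conformalTo y hy hy0 hyg := by
    have hsy : s • y = g := hg.eq_of_conformalTo _
      ((mixedKer_mul_diagonal_intUnits_iff s).1 hy)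
      (fun h => hy0 <| by rw [← intUnits_smul_smul_self s y, h, smul_zero])
      ((conformalTo_intUnits_smul_iff s).2 hyg)
    rw [← hsy, intUnits_smul_smul_self]

theorem IsConformallyMinimal.vnorm1_le [Fintype R] (hg : IsConformallyMinimal E I g) :
    vnorm1 g ≤
      (2 * (Fintype.card R : ℝ) ^ 2 * matNormInf E + 1) ^ (Fintype.card R + 1) := by
  obtain ⟨s, hs⟩ := exists_nonneg_intUnits_smul g
  calc vnorm1 g = ∑ c, (s • g) c := by
        rw [← vnorm1_intUnits_smul s, vnorm1]
        exact Finset.sum_congr rfl fun c _ => abs_of_nonneg (hs c)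
    _ ≤ _ := (hg.intUnits_smul s).sum_le hs
    _ = _ := by rw [matNormInf_mul_diagonal_intUnits]

end SignChange

/-! ### Circuits -/

lemma dvd_of_forall_dvd_mul {ι : Type*} [Fintype ι] {g : ι → ℤ}
    (hg : (Finset.univ.gcd fun i => (g i).natAbs) = 1) {a b : ℤ} (h : ∀ i, a ∣ b * g i) :
    a ∣ b := by
  have hdvd : a.natAbs ∣ Finset.univ.gcd fun i => b.natAbs * (g i).natAbs :=
    Finset.dvd_gcd fun i _ => by
      rw [← Int.natAbs_mul]
      exact Int.natAbs_dvd_natAbs.2 (h i)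
  rw [Finset.gcd_mul_left, hg] at hdvd
  simpa [Int.natAbs_dvd_natAbs] using hdvd

section Circuits

variable {R C : Type*} [Fintype C]

lemma IsCircuit.mulVec_cast_eq_zero {A : Matrix R C ℤ} {g : C → ℤ} (hg : IsCircuit A g) :
    A.map Int.cast *ᵥ (fun c => (g c : ℝ)) = 0 := by
  ext j
  have h := ((Int.castRingHom ℝ).map_mulVec A g j).symm
  rwa [hg.2.1, Pi.zero_apply, map_zero] at h

/-- Otherwise `g c' • y - y c' • g` would be a nonzero kernel element whose support is contained in
that of `g` and misses `c'`. -/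
lemma IsCircuit.mul_eq_mul {A : Matrix R C ℤ} {g : C → ℤ} (hg : IsCircuit A g) {y : C → ℝ}
    (hAy : A.map Int.cast *ᵥ y = 0) (hsupp : ∀ c, g c = 0 → y c = 0) (c c' : C) :
    g c' * y c = y c' * g c := by
  by_cases hc' : g c' = 0
  · simp [hc', hsupp c' hc']
  set d : C → ℝ := (g c' : ℝ) • y - y c' • fun c => (g c : ℝ) with hd
  have hAd : A.map Int.cast *ᵥ d = 0 := by
    rw [hd, mulVec_sub, mulVec_smul, mulVec_smul, hAy,
      hg.mulVec_cast_eq_zero, smul_zero, smul_zero, sub_zero]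
  have hd0 : d = 0 := by
    by_contra hne
    refine hg.2.2.2 d hne hAd ⟨fun i hi hgi => hi ?_, fun hsub => ?_⟩
    · have hgi' : g i = 0 := Int.cast_eq_zero.1 hgi
      simp [hd, hgi', hsupp i hgi']
    · exact hsub (a := c') (by simpa using hc') (by simp [hd, mul_comm])
  simpa [hd, sub_eq_zero] using congrFun hd0 c

lemma submatrix_mulVec_comp {D α : Type*} [Fintype D] [NonUnitalNonAssocSemiring α]
    (M : Matrix R C α) {e : D → C} (he : Function.Injective e) {x : C → α}
    (hx : ∀ c ∉ Set.range e, x c = 0) : M.submatrix id e *ᵥ (x ∘ e) = M *ᵥ x := by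
  ext j
  exact Fintype.sum_of_injective e he _ _ (fun c hc => by simp [hx c hc]) fun _ => rfl

variable [DecidableEq C]

lemma IsCircuit.isConformallyMinimal {A : Matrix R C ℤ} {g : C → ℤ} (hg : IsCircuit A g) :
    IsConformallyMinimal A Finset.univ fun c => (g c : ℝ) where
  mem := ⟨hg.mulVec_cast_eq_zero, fun c _ => ⟨g c, rfl⟩⟩
  ne_zero h := hg.1 <| by
    ext c
    exact Int.cast_eq_zero.1 (congrFun h c)
  eq_of_conformalTo y hy hy0 hyg := by
    have hsupp : ∀ c, g c = 0 → y c = 0 := fun c hc => by simpa [hc] using (hyg c).1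
    choose z hz using fun c => hy.2 c (Finset.mem_univ c)
    have hprop (c c' : C) : g c' * z c = z c' * g c := by
      have h := hg.mul_eq_mul hy.1 hsupp c c'
      rw [hz, hz] at h
      exact_mod_cast h
    obtain ⟨c', hc'⟩ := Function.ne_iff.1 hy0
    have hzc' : z c' ≠ 0 := fun h => hc' <| by simp [hz, h]
    have hgc' : g c' ≠ 0 := fun h => hc' <| hsupp c' h
    have hdvd : g c' ∣ z c' :=
      dvd_of_forall_dvd_mul hg.2.2.1 fun c => hprop c c' ▸ dvd_mul_right _ _
    have hle : |z c'| ≤ |g c'| ∧ 0 ≤ z c' * g c' := by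
      have h := hyg c'
      simp only [hz] at h
      exact_mod_cast h
    have heq : z c' = g c' := by
      have habs : |z c'| = |g c'| :=
        hle.1.antisymm (Int.le_of_dvd (abs_pos.2 hzc') ((abs_dvd_abs _ _).2 hdvd))
      rcases abs_eq_abs.1 habs with h | h
      · exact h
      · nlinarith [mul_self_pos.2 hgc', hle.2]
    ext c
    have h := hprop c c'
    rw [heq] at h
    rw [hz, mul_left_cancel₀ hgc' h]

lemma IsConformallyMinimal.of_submatrix {D : Type*} [Fintype D] [DecidableEq D]
    {E : Matrix R C ℤ} {e : D → C} (he : Function.Injective e) {g : C → ℝ}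
    (hg : IsConformallyMinimal (E.submatrix id e) Finset.univ (g ∘ e))
    (hg0 : ∀ c ∉ Set.range e, g c = 0) : IsConformallyMinimal E Finset.univ g := by
  have hker {x : C → ℝ} (hx : ∀ c ∉ Set.range e, x c = 0) :
      MixedKer (E.submatrix id e) Finset.univ (x ∘ e) ↔ MixedKer E Finset.univ x := by
    rw [mixedKer_iff, mixedKer_iff, ← submatrix_map, submatrix_mulVec_comp _ he hx]
    refine and_congr_right fun _ => ⟨fun h c _ => ?_, fun h d _ => h (e d) (Finset.mem_univ _)⟩
    by_cases hc : c ∈ Set.range e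
    · obtain ⟨d, rfl⟩ := hc
      exact h d (Finset.mem_univ d)
    · rw [hx c hc]
      exact zero_mem _
  have hext {x y : C → ℝ} (hx : ∀ c ∉ Set.range e, x c = 0) (hy : ∀ c ∉ Set.range e, y c = 0)
      (h : x ∘ e = y ∘ e) : x = y := by
    ext c
    by_cases hc : c ∈ Set.range e
    · obtain ⟨d, rfl⟩ := hc
      exact congrFun h d
    · rw [hx c hc, hy c hc]
  refine ⟨(hker hg0).1 hg.mem, fun h => hg.ne_zero (by rw [h]; rfl), fun y hy hy0 hyg => ?_⟩
  have hy0' : ∀ c ∉ Set.range e, y c = 0 := fun c hc => by simpa [hg0 c hc] using (hyg c).1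
  refine hext hy0' hg0 (hg.eq_of_conformalTo _ ((hker hy0').2 hy) (fun h => hy0 ?_)
    fun d => hyg (e d))
  exact hext hy0' (fun _ _ => rfl) h

lemma InMixedGraver.exists_isConformallyMinimal {E : Matrix R C ℤ} {I : Finset C} {g : C → ℝ}
    (hg : InMixedGraver E I g) : ∃ J, IsConformallyMinimal E J g := by
  rcases hg with ⟨hker, ⟨i, -, hi⟩, hmin⟩ | ⟨hI, z, hgz, hz⟩
  · exact ⟨I, hker, fun h => hi (congrFun h i), fun y hy hy0 hyg =>
      by_contra fun hne => hmin y hy hy0 hne hyg⟩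
  · refine ⟨Finset.univ,
      .of_submatrix (D := {c // c ∉ I}) Subtype.val_injective ?_ fun c hc => hI c ?_⟩
    · rw [show g ∘ Subtype.val = fun c => (z c : ℝ) from funext hgz]
      exact hz.isConformallyMinimal
    · simpa using hc

end Circuits

theorem mixedGraver_norm1_bound_improved_general {R C : Type*} [Fintype R] [Fintype C]
    [DecidableEq C] (E : Matrix R C ℤ) (I : Finset C) (g : C → ℝ) (hg : InMixedGraver E I g) :
    vnorm1 g ≤
      (2 * (Fintype.card R : ℝ) ^ 2 * matNormInf E + 1) ^ (Fintype.card R + 1) :=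
  let ⟨_, h⟩ := hg.exists_isConformallyMinimal
  h.vnorm1_le

/-- every element of the mixed Graver basis satisfies
`‖g‖₁ ≤ (2m²‖E‖∞ + 1)^(m+1)`. -/
theorem mixedGraver_norm1_bound_improved (m N : ℕ) (E : Matrix (Fin m) (Fin N) ℤ)
    (I : Finset (Fin N)) (g : Fin N → ℝ) (hg : InMixedGraver E I g) :
    vnorm1 g ≤ (2 * (m : ℝ) ^ 2 * (matNormInf E : ℝ) + 1) ^ (m + 1) := by
  simpa using mixedGraver_norm1_bound_improved_general E I g hg
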